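/- arXiv:2409.06497 — 3 statements merged into one kernel-verified Lean document; each statement's English description precedes it below -/
import Mathlib

section
/- For every Lebesgue-measurable set A ⊆ (0,1], the series Σ_{k=1}^∞ ( k^{-4/3} ∫_A x^{k^{-1/3} − 1} dx )^2 converges (is finite). -/
open MeasureTheory

lemma aux_integral_le (A : Set ℝ) (hA : MeasurableSet A)
    (hsub : A ⊆ Set.Ioc 0 1) (s : ℝ) (hs : 0 < s) :
    0 ≤ ∫ x in A, x ^ (s - 1) ∧ ∫ x in A, x ^ (s - 1) ≤ s⁻¹ := by
  constructor
  · exact setIntegral_nonneg hA fun x hx => Real.rpow_nonneg (hsub hx).1.le _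
  · have hi : IntegrableOn (fun x : ℝ => x ^ (s - 1)) (Set.Ioc 0 1) :=
      (intervalIntegrable_iff_integrableOn_Ioc_of_le zero_le_one).1
        (intervalIntegral.intervalIntegrable_rpow' (by linarith))
    have h1 : ∫ x in A, x ^ (s - 1) ≤ ∫ x in Set.Ioc (0:ℝ) 1, x ^ (s - 1) := by
      refine setIntegral_mono_set hi ?_ (Filter.Eventually.of_forall hsub)
      filter_upwards [ae_restrict_mem measurableSet_Ioc] with x hx
      exact Real.rpow_nonneg hx.1.le _
    have h2 : ∫ x in Set.Ioc (0:ℝ) 1, x ^ (s - 1) = s⁻¹ := by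
      rw [← intervalIntegral.integral_of_le zero_le_one, integral_rpow (Or.inl (by linarith))]
      simp [Real.zero_rpow hs.ne']
    exact h1.trans h2.le

/-- Square-summability claim from the Example of Section 3: for every
measurable `A ⊆ (0,1]`, the series `Σ_k (k^(-4/3) ∫_A x^(k^(-1/3) - 1) dx)²`
converges.  (The index `k ≥ 1` is encoded as `k + 1` with `k : ℕ`.) -/
theorem example_sq_summable (A : Set ℝ) (hA : MeasurableSet A)
    (hsub : A ⊆ Set.Ioc 0 1) :
    Summable (fun k : ℕ =>
      (((k:ℝ)+1) ^ (-(4:ℝ)/3) * ∫ x in A, x ^ (((k:ℝ)+1) ^ (-(1:ℝ)/3) - 1))^2) := by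
  have hsum : Summable (fun k : ℕ => (((k:ℝ)+1)⁻¹)^2) := by
    have h := (summable_nat_add_iff 1).2 (Real.summable_nat_pow_inv.2 one_lt_two)
    simpa [inv_pow] using h
  refine Summable.of_nonneg_of_le (fun k => sq_nonneg _) (fun k => ?_) hsum
  have hk : (0:ℝ) < (k:ℝ) + 1 := by positivity
  obtain ⟨h0, h1⟩ := aux_integral_le A hA hsub (((k:ℝ)+1) ^ (-(1:ℝ)/3)) (Real.rpow_pos_of_pos hk _)
  have hp : (0:ℝ) ≤ ((k:ℝ)+1) ^ (-(4:ℝ)/3) := Real.rpow_nonneg hk.le _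
  refine pow_le_pow_left₀ (mul_nonneg hp h0) ((mul_le_mul_of_nonneg_left h1 hp).trans (le_of_eq ?_)) 2
  rw [← Real.rpow_neg hk.le, ← Real.rpow_add hk, ← Real.rpow_neg_one]
  norm_num
end

section
/- Let f : [0,1] → ℝ be measurable and let k ≥ 1 be an integer. Then ∫_0^1 |f(x)| x^{k^{-1/3} − 1} dx ≤ 2 k^{1/3} ( ∫_0^1 |f(x)|^{2k^{1/3} − 1} dx )^{1/(2k^{1/3} − 1)}. -/
open MeasureTheory

lemma holder_aux (f : ℝ → ℝ) (hf : Measurable f) (a : ℝ) (ha : 1 ≤ a) :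
    (∫⁻ x in Set.Icc (0:ℝ) 1, ENNReal.ofReal (|f x| * x ^ (a⁻¹ - 1))) ≤
      ENNReal.ofReal (2 * a) *
        (∫⁻ x in Set.Icc (0:ℝ) 1, ENNReal.ofReal (|f x| ^ (2 * a - 1))) ^ (1 / (2 * a - 1)) := by
  have h2a : (1 : ENNReal) ≤ ENNReal.ofReal (2 * a) := by
    rw [ENNReal.one_le_ofReal]; linarith
  rcases ha.eq_or_lt with rfl | ha1
  · have e : (2 * 1 - 1 : ℝ) = 1 := by norm_num
    rw [e]
    simp only [inv_one, sub_self, Real.rpow_zero, mul_one, Real.rpow_one, div_one,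
      ENNReal.rpow_one]
    exact le_mul_of_one_le_left' (by simpa using h2a)
  have ha0 : 0 < a := by linarith
  have hp : 0 < 2 * a - 1 := by linarith
  have hpq : (2 * a - 1).HolderConjugate ((2 * a - 1) / (2 * a - 2)) := by
    have := Real.HolderConjugate.conjExponent (p := 2 * a - 1) (by linarith)
    rw [Real.conjExponent] at this
    convert this using 2
    ring
  set q := (2 * a - 1) / (2 * a - 2) with hq
  have hexp : (a⁻¹ - 1) * q = 1 / (2 * a) - 1 := by
    rw [hq]
    have : 2 * a - 2 ≠ 0 := by linarith
    have : a - 1 ≠ 0 := by linarith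
    field_simp
    ring
  have key := ENNReal.lintegral_mul_le_Lp_mul_Lq (volume.restrict (Set.Icc (0:ℝ) 1)) hpq
    (f := fun x => ENNReal.ofReal |f x|) (g := fun x => ENNReal.ofReal (x ^ (a⁻¹ - 1)))
    (by fun_prop) (by fun_prop)
  have e1 : (∫⁻ x in Set.Icc (0:ℝ) 1, ENNReal.ofReal (|f x| * x ^ (a⁻¹ - 1))) =
      ∫⁻ x in Set.Icc (0:ℝ) 1, ((fun x => ENNReal.ofReal |f x|) *
        (fun x => ENNReal.ofReal (x ^ (a⁻¹ - 1)))) x := by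
    refine lintegral_congr fun x => ?_
    simp [ENNReal.ofReal_mul (abs_nonneg (f x))]
  have e2 : (∫⁻ x in Set.Icc (0:ℝ) 1, ENNReal.ofReal |f x| ^ (2 * a - 1)) =
      ∫⁻ x in Set.Icc (0:ℝ) 1, ENNReal.ofReal (|f x| ^ (2 * a - 1)) := by
    refine lintegral_congr fun x => ?_
    rw [ENNReal.ofReal_rpow_of_nonneg (abs_nonneg _) hp.le]
  have hr : (-1 : ℝ) < 1 / (2 * a) - 1 := by
    have : 0 < 1 / (2 * a) := by positivity
    linarith
  have e3 : (∫⁻ x in Set.Icc (0:ℝ) 1, ENNReal.ofReal (x ^ (a⁻¹ - 1)) ^ q) =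
      ENNReal.ofReal (2 * a) := by
    have : (∫⁻ x in Set.Icc (0:ℝ) 1, ENNReal.ofReal (x ^ (a⁻¹ - 1)) ^ q) =
        ∫⁻ x in Set.Icc (0:ℝ) 1, ENNReal.ofReal (x ^ (1 / (2 * a) - 1)) := by
      refine setLIntegral_congr_fun measurableSet_Icc fun x hx => ?_
      rw [ENNReal.ofReal_rpow_of_nonneg (Real.rpow_nonneg hx.1 _) hpq.symm.nonneg,
        ← Real.rpow_mul hx.1, hexp]
    rw [this, setLIntegral_congr (Ioc_ae_eq_Icc (a := (0:ℝ)) (b := 1)).symm,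
      ← ofReal_integral_eq_lintegral_ofReal, ← intervalIntegral.integral_of_le zero_le_one,
      integral_rpow (Or.inl hr)]
    · congr 1
      have : (1 / (2 * a) : ℝ) ≠ 0 := by positivity
      rw [sub_add_cancel, Real.zero_rpow this, Real.one_rpow]
      simp
    · exact (intervalIntegrable_iff_integrableOn_Ioc_of_le zero_le_one).1
        (intervalIntegral.intervalIntegrable_rpow' hr)
    · refine (ae_restrict_iff' measurableSet_Ioc).2 (Filter.Eventually.of_forall fun x hx => ?_)
      exact Real.rpow_nonneg hx.1.le _
  rw [e1]
  refine key.trans ?_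
  rw [e2, e3, mul_comm]
  gcongr
  calc ENNReal.ofReal (2 * a) ^ (1 / q) ≤ ENNReal.ofReal (2 * a) ^ (1 : ℝ) := by
        apply ENNReal.rpow_le_rpow_of_exponent_le h2a
        rw [one_div]
        exact inv_le_one_of_one_le₀ hpq.symm.lt.le
    _ = _ := ENNReal.rpow_one _


/-- Hölder-inequality estimate (eq. (12)) from the Example of Section 3:
`∫₀¹ |f| x^(k^(-1/3) - 1) dx ≤ 2 k^(1/3) (∫₀¹ |f|^(2k^(1/3) - 1) dx)^(1/(2k^(1/3)-1))`,
both sides possibly infinite (stated with lower integrals in `ℝ≥0∞`). -/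
theorem example_holder_estimate (f : ℝ → ℝ) (hf : Measurable f)
    (k : ℕ) (hk : 1 ≤ k) :
    (∫⁻ x in Set.Icc (0:ℝ) 1,
        ENNReal.ofReal (|f x| * x ^ ((k:ℝ) ^ (-(1:ℝ)/3) - 1))) ≤
      ENNReal.ofReal (2 * (k:ℝ) ^ ((1:ℝ)/3)) *
        (∫⁻ x in Set.Icc (0:ℝ) 1,
            ENNReal.ofReal (|f x| ^ (2 * (k:ℝ) ^ ((1:ℝ)/3) - 1)))
          ^ (1 / (2 * (k:ℝ) ^ ((1:ℝ)/3) - 1)) := by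
  have hk' : (1:ℝ) ≤ k := by exact_mod_cast hk
  have h := holder_aux f hf ((k:ℝ) ^ ((1:ℝ)/3)) (Real.one_le_rpow hk' (by norm_num))
  rw [← Real.rpow_neg (by linarith), ← neg_div] at h
  exact h
end

section
/- Let f : [0,1] → ℝ be measurable and suppose there exists λ > 0 such that ∫_0^1 2^{λ |f(x)|} dx < ∞. Then for every Lebesgue-measurable set A ⊆ [0,1], Σ_{k=1}^∞ ( k^{-4/3} ∫_A |f(x)| x^{k^{-1/3} − 1} dx )^2 < ∞. -/
open MeasureTheory

lemma aux_lint (b : ℝ) (hb : 0 < b) :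
    (∫⁻ x in Set.Ioc (0:ℝ) 1, ENNReal.ofReal (x ^ (b - 1))) = ENNReal.ofReal (1 / b) := by
  have h1 : IntervalIntegrable (fun x : ℝ => x ^ (b - 1)) volume 0 1 :=
    intervalIntegral.intervalIntegrable_rpow' (by linarith)
  rw [intervalIntegrable_iff_integrableOn_Ioc_of_le zero_le_one] at h1
  rw [← ofReal_integral_eq_lintegral_ofReal h1]
  · rw [← intervalIntegral.integral_of_le zero_le_one, integral_rpow (Or.inl (by linarith))]
    congr 1
    rw [Real.zero_rpow (by linarith)]
    simp
  · refine (ae_restrict_iff' measurableSet_Ioc).2 (Filter.Eventually.of_forall ?_)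
    intro x hx
    exact Real.rpow_nonneg hx.1.le _

lemma aux_pt (lam a y x : ℝ) (ha : 0 < a) (ha1 : a ≤ 1) (hx : 0 < x)
    (hx1 : x ≤ 1) (hl : 0 < lam) :
    y * x ^ (a - 1) ≤ (1 / (lam * Real.log 2)) *
      ((2:ℝ) ^ (lam * y) + 2 / a * x ^ (a / 2 - 1)) := by
  have hlog : 0 < Real.log 2 := Real.log_pos (by norm_num)
  have hm : 0 < lam * Real.log 2 := mul_pos hl hlog
  have e2 : (2:ℝ) ^ (lam * y) = Real.exp (lam * Real.log 2 * y) := by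
    rw [Real.rpow_def_of_pos (by norm_num)]; ring_nf
  have eu : x ^ (a - 1) = Real.exp (Real.log x * (a - 1)) := Real.rpow_def_of_pos hx _
  have hu : 0 < x ^ (a - 1) := Real.rpow_pos_of_pos hx _
  have hlx : Real.log x ≤ 0 := Real.log_nonpos hx.le hx1
  have h1 : lam * Real.log 2 * y - Real.log x * (a - 1) ≤
      Real.exp (lam * Real.log 2 * y - Real.log x * (a - 1)) := by
    linarith [Real.add_one_le_exp (lam * Real.log 2 * y - Real.log x * (a - 1))]
  have h2 : (lam * Real.log 2 * y - Real.log x * (a - 1)) * x ^ (a - 1) ≤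
      Real.exp (lam * Real.log 2 * y) := by
    refine (mul_le_mul_of_nonneg_right h1 hu.le).trans (le_of_eq ?_)
    rw [eu, ← Real.exp_add]; ring_nf
  have h3 : Real.log x * (a - 1) ≤ 2 / a * x ^ (-(a / 2)) := by
    have h4 := Real.add_one_le_exp (Real.log x * (-(a / 2)))
    rw [← Real.rpow_def_of_pos hx] at h4
    have h5 : -Real.log x ≤ 2 / a * x ^ (-(a / 2)) := by
      rw [div_mul_eq_mul_div, le_div_iff₀ ha]; linarith
    nlinarith
  have h6 : Real.log x * (a - 1) * x ^ (a - 1) ≤ 2 / a * x ^ (a / 2 - 1) := by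
    refine (mul_le_mul_of_nonneg_right h3 hu.le).trans (le_of_eq ?_)
    rw [mul_assoc, ← Real.rpow_add hx]; ring_nf
  rw [one_div, inv_mul_eq_div, le_div_iff₀ hm, e2]
  linarith

lemma aux_int (f : ℝ → ℝ) (hf : Measurable f) (lam : ℝ) (hl : 0 < lam)
    (C : ℝ) (hC : 0 ≤ C)
    (h : (∫⁻ x in Set.Icc (0:ℝ) 1, ENNReal.ofReal ((2:ℝ) ^ (lam * |f x|))) = ENNReal.ofReal C)
    (A : Set ℝ) (hA : A ⊆ Set.Icc 0 1) (a : ℝ) (ha : 0 < a) (ha1 : a ≤ 1) :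
    (∫⁻ x in A, ENNReal.ofReal (|f x| * x ^ (a - 1))) ≤
      ENNReal.ofReal ((1 / (lam * Real.log 2)) * (C + 4) * (1 / a ^ 2)) := by
  have hlog : 0 < Real.log 2 := Real.log_pos (by norm_num)
  have hm : 0 < lam * Real.log 2 := mul_pos hl hlog
  have hm' : 0 ≤ 1 / (lam * Real.log 2) := by positivity
  rw [setLIntegral_congr (Ioc_ae_eq_Icc (a := (0:ℝ)) (b := 1)).symm] at h
  calc (∫⁻ x in A, ENNReal.ofReal (|f x| * x ^ (a - 1)))
      ≤ ∫⁻ x in Set.Icc 0 1, ENNReal.ofReal (|f x| * x ^ (a - 1)) :=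
        lintegral_mono_set hA
    _ = ∫⁻ x in Set.Ioc 0 1, ENNReal.ofReal (|f x| * x ^ (a - 1)) :=
        setLIntegral_congr (Ioc_ae_eq_Icc (a := (0:ℝ)) (b := 1)).symm
    _ ≤ ∫⁻ x in Set.Ioc 0 1, ENNReal.ofReal (1 / (lam * Real.log 2)) *
          (ENNReal.ofReal ((2:ℝ) ^ (lam * |f x|)) +
            ENNReal.ofReal (2 / a) * ENNReal.ofReal (x ^ (a / 2 - 1))) := by
        refine setLIntegral_mono' measurableSet_Ioc ?_
        intro x hx
        have hp : 0 ≤ x ^ (a / 2 - 1) := Real.rpow_nonneg hx.1.le _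
        rw [← ENNReal.ofReal_mul (by positivity), ← ENNReal.ofReal_add (by positivity)
          (by positivity), ← ENNReal.ofReal_mul hm']
        exact ENNReal.ofReal_le_ofReal (aux_pt lam a _ x ha ha1 hx.1 hx.2 hl)
    _ = ENNReal.ofReal (1 / (lam * Real.log 2)) * (ENNReal.ofReal C +
          ENNReal.ofReal (2 / a) * ENNReal.ofReal (1 / (a / 2))) := by
        rw [lintegral_const_mul' _ _ ENNReal.ofReal_ne_top, lintegral_add_left (by fun_prop),
          lintegral_const_mul' _ _ ENNReal.ofReal_ne_top, aux_lint _ (by positivity), h]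
    _ ≤ _ := by
        rw [← ENNReal.ofReal_mul (by positivity), ← ENNReal.ofReal_add (by positivity)
          (by positivity), ← ENNReal.ofReal_mul hm']
        refine ENNReal.ofReal_le_ofReal ?_
        rw [mul_assoc]
        refine mul_le_mul_of_nonneg_left ?_ hm'
        have : 1 ≤ 1 / a ^ 2 := by
          rw [le_div_iff₀ (by positivity)]; nlinarith
        have h7 : 2 / a * (1 / (a / 2)) = 4 * (1 / a ^ 2) := by field_simp; norm_num
        rw [h7]
        nlinarith


/-- Main analytic claim of the Example in Section 3: if `∫₀¹ 2^(λ|f|) dx < ∞`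
for some `λ > 0`, then for every measurable `A ⊆ [0,1]` the series
`Σ_k (k^(-4/3) ∫_A |f(x)| x^(k^(-1/3) - 1) dx)²` is finite.
(The index `k ≥ 1` is encoded as `k + 1` with `k : ℕ`; integrals are lower
integrals in `ℝ≥0∞` so that everything is well defined.) -/
theorem example_exp_integrable_implies_sq_summable
    (f : ℝ → ℝ) (hf : Measurable f)
    (hexp : ∃ lam : ℝ, 0 < lam ∧
      (∫⁻ x in Set.Icc (0:ℝ) 1, ENNReal.ofReal ((2:ℝ) ^ (lam * |f x|))) < ⊤) :
    ∀ A : Set ℝ, MeasurableSet A → A ⊆ Set.Icc 0 1 →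
      (∑' k : ℕ,
        (ENNReal.ofReal (((k:ℝ)+1) ^ (-(4:ℝ)/3)) *
          ∫⁻ x in A,
            ENNReal.ofReal (|f x| * x ^ (((k:ℝ)+1) ^ (-(1:ℝ)/3) - 1)))^2) < ⊤ := by
  obtain ⟨lam, hl, hfin⟩ := hexp
  intro A _ hA
  have h := (ENNReal.ofReal_toReal hfin.ne).symm
  set C := (∫⁻ x in Set.Icc (0:ℝ) 1, ENNReal.ofReal ((2:ℝ) ^ (lam * |f x|))).toReal
  have hC : 0 ≤ C := ENNReal.toReal_nonneg
  have hlog : 0 < Real.log 2 := Real.log_pos (by norm_num)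
  set D := (1 / (lam * Real.log 2)) * (C + 4) with hD
  have hD0 : 0 ≤ D := by positivity
  have hs : Summable (fun k : ℕ => D ^ 2 * ((k:ℝ) + 1) ^ (-(4:ℝ)/3)) := by
    refine Summable.mul_left _ ?_
    have := (summable_nat_add_iff 1).2
      (Real.summable_nat_rpow (p := -(4:ℝ)/3) |>.2 (by norm_num))
    simpa using this
  refine lt_of_le_of_lt (ENNReal.tsum_le_tsum (g := fun k : ℕ =>
    ENNReal.ofReal (D ^ 2 * ((k:ℝ) + 1) ^ (-(4:ℝ)/3))) ?_) hs.tsum_ofReal_lt_top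
  intro k
  have hk : (0:ℝ) < (k:ℝ) + 1 := by positivity
  have hk1 : (1:ℝ) ≤ (k:ℝ) + 1 := by simp
  have hb := aux_int f hf lam hl C hC h A hA (((k:ℝ)+1) ^ (-(1:ℝ)/3))
    (by positivity) (Real.rpow_le_one_of_one_le_of_nonpos hk1 (by norm_num))
  rw [← hD] at hb
  refine (pow_le_pow_left₀ (zero_le) (mul_le_mul_right hb _) 2).trans ?_
  rw [← ENNReal.ofReal_mul (by positivity), ← ENNReal.ofReal_pow (by positivity)]
  refine ENNReal.ofReal_le_ofReal (le_of_eq ?_)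
  have e1 : 1 / (((k:ℝ)+1) ^ (-(1:ℝ)/3)) ^ 2 = ((k:ℝ)+1) ^ ((2:ℝ)/3) := by
    rw [← Real.rpow_natCast, ← Real.rpow_mul hk.le, one_div, ← Real.rpow_neg hk.le]
    norm_num
  have e2 : ((k:ℝ)+1) ^ (-(4:ℝ)/3) * ((k:ℝ)+1) ^ ((2:ℝ)/3) = ((k:ℝ)+1) ^ (-(2:ℝ)/3) := by
    rw [← Real.rpow_add hk]; norm_num
  have e3 : (((k:ℝ)+1) ^ (-(2:ℝ)/3)) ^ 2 = ((k:ℝ)+1) ^ (-(4:ℝ)/3) := by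
    rw [← Real.rpow_natCast, ← Real.rpow_mul hk.le]; norm_num
  rw [← e2] at e3
  rw [e1]
  linear_combination D ^ 2 * e3
end
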